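/- arXiv:2308.14660 — 2 statements merged into one kernel-verified Lean document; each statement's English description precedes it below -/
import Mathlib

section
/- For every g ∈ W^{1,2}((0, α)) (viewed as a function on the boundary arc {ρ = 1, 0 ≤ θ ≤ α} of the circular sector V = {(ρ, θ) : 0 < ρ < 1, 0 < θ < α} with 0 < α < 2π), there exists a harmonic function v ∈ W^{1,2}(V) extending g with ∫_V |∇v|² ≤ (α/π) ∫₀^α |g′(θ)|² dθ. -/
open Real MeasureTheory Set

/-- The open circular sector of radius 1 and opening angle `α` in the plane. -/
def sector (α : ℝ) : Set (EuclideanSpace ℝ (Fin 2)) :=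
  {x | ∃ ρ ∈ Set.Ioo (0:ℝ) 1, ∃ θ ∈ Set.Ioo (0:ℝ) α,
    x = ((WithLp.equiv 2 (Fin 2 → ℝ)).symm ![ρ * Real.cos θ, ρ * Real.sin θ] : EuclideanSpace ℝ (Fin 2))}

theorem aux_cos_int (α : ℝ) (hα : 0 < α) (n : ℤ) (hn : n ≠ 0) :
    ∫ t in (0:ℝ)..α, Real.cos (n * (π / α) * t) = 0 := by
  have hc : (n : ℝ) * (π / α) ≠ 0 := by
    have : (n : ℝ) ≠ 0 := by exact_mod_cast hn
    positivity
  rw [intervalIntegral.integral_comp_mul_left (fun x => Real.cos x) hc, integral_cos]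
  have : (n : ℝ) * (π / α) * α = n * π := by field_simp
  rw [this]
  simp [Real.sin_int_mul_pi]

theorem aux_sin_orth (α : ℝ) (hα : 0 < α) (j k : ℕ) :
    ∫ t in (0:ℝ)..α, Real.sin (j * (π / α) * t) * Real.sin (k * (π / α) * t)
      = if j = k ∧ k ≠ 0 then α / 2 else 0 := by
  have h : ∀ t : ℝ, Real.sin (j * (π / α) * t) * Real.sin (k * (π / α) * t)
      = (1/2) * (Real.cos (((j - k : ℤ) : ℝ) * (π / α) * t)
        - Real.cos (((j + k : ℤ) : ℝ) * (π / α) * t)) := by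
    intro t
    push_cast
    rw [show ((j:ℝ) - k) * (π / α) * t = j * (π / α) * t - k * (π / α) * t by ring,
      show ((j:ℝ) + k) * (π / α) * t = j * (π / α) * t + k * (π / α) * t by ring,
      Real.cos_sub, Real.cos_add]
    ring
  simp_rw [h]
  rw [intervalIntegral.integral_const_mul, intervalIntegral.integral_sub
    (Continuous.intervalIntegrable (by fun_prop) _ _)
    (Continuous.intervalIntegrable (by fun_prop) _ _)]
  by_cases hjk : j = k
  · subst hjk
    by_cases hj : j = 0
    · subst hj; simp
    · rw [aux_cos_int α hα ((j:ℤ) + j) (by omega)]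
      simp [hj]; ring
  · rw [aux_cos_int α hα ((j:ℤ) - k) (by omega), aux_cos_int α hα ((j:ℤ) + k) (by omega)]
    simp [hjk]

theorem aux_bessel (α : ℝ) (hα : 0 < α) (g' : ℝ → ℝ)
    (hg'1 : IntervalIntegrable g' volume 0 α)
    (hg'2 : IntervalIntegrable (fun t => (g' t)^2) volume 0 α) (b : ℕ → ℝ)
    (hb : ∀ k, b k = (2 / α) * ∫ t in (0:ℝ)..α, g' t * Real.sin (k * (π / α) * t)) (N : ℕ) :
    ∑ k ∈ Finset.range N, (b k)^2 ≤ (2 / α) * ∫ t in (0:ℝ)..α, (g' t)^2 := by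
  set S : ℝ → ℝ := fun t => ∑ k ∈ Finset.range N, b k * Real.sin (k * (π / α) * t) with hS
  have hSc : Continuous S := by fun_prop
  have hb0 : b 0 = 0 := by simp [hb]
  have hI : ∀ k : ℕ, ∫ t in (0:ℝ)..α, g' t * Real.sin (k * (π / α) * t) = α / 2 * b k := by
    intro k; rw [hb]; field_simp
  have h1 : ∫ t in (0:ℝ)..α, g' t * S t = α / 2 * ∑ k ∈ Finset.range N, (b k)^2 := by
    simp_rw [hS, Finset.mul_sum]
    rw [intervalIntegral.integral_finsetSum]
    · refine Finset.sum_congr rfl fun k _ => ?_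
      have : ∀ t, g' t * (b k * Real.sin (k * (π / α) * t))
        = b k * (g' t * Real.sin (k * (π / α) * t)) := by intro t; ring
      simp_rw [this]
      rw [intervalIntegral.integral_const_mul, hI]; ring
    · intro k _
      exact hg'1.mul_continuousOn (by fun_prop)
  have h2 : ∫ t in (0:ℝ)..α, S t * S t = α / 2 * ∑ k ∈ Finset.range N, (b k)^2 := by
    simp_rw [hS, Finset.sum_mul_sum]
    rw [intervalIntegral.integral_finsetSum, Finset.mul_sum]
    · refine Finset.sum_congr rfl fun k hk => ?_
      rw [intervalIntegral.integral_finsetSum]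
      · have : ∀ j, ∫ t in (0:ℝ)..α, b k * Real.sin (k * (π / α) * t) *
            (b j * Real.sin (j * (π / α) * t)) = if k = j then α / 2 * (b k)^2 else 0 := by
          intro j
          have : ∀ t, b k * Real.sin (k * (π / α) * t) * (b j * Real.sin (j * (π / α) * t))
            = (b k * b j) * (Real.sin (k * (π / α) * t) * Real.sin (j * (π / α) * t)) := by
              intro t; ring
          simp_rw [this]
          rw [intervalIntegral.integral_const_mul, aux_sin_orth α hα]
          by_cases hkj : k = j
          · subst hkj
            by_cases hk0 : k = 0
            · subst hk0; simp [hb0]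
            · simp [hk0]; ring
          · simp [hkj]
        simp_rw [this]
        simp only [Finset.sum_ite_eq, hk, if_true]
      · intro j _
        exact Continuous.intervalIntegrable (by fun_prop) _ _
    · intro j _
      exact Continuous.intervalIntegrable (by fun_prop) _ _
  have h3 : 0 ≤ ∫ t in (0:ℝ)..α, (g' t - S t)^2 :=
    intervalIntegral.integral_nonneg hα.le fun t _ => sq_nonneg _
  have h4 : ∀ t, (g' t - S t)^2 = (g' t)^2 - 2 * (g' t * S t) + S t * S t := by intro t; ring
  have hi1 : IntervalIntegrable (fun t => g' t * S t) volume 0 α :=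
    hg'1.mul_continuousOn hSc.continuousOn
  have hi2 : IntervalIntegrable (fun t => S t * S t) volume 0 α :=
    (hSc.mul hSc).intervalIntegrable _ _
  simp_rw [h4] at h3
  rw [intervalIntegral.integral_add (hg'2.sub (hi1.const_mul 2)) hi2, intervalIntegral.integral_sub hg'2 (hi1.const_mul 2),
    intervalIntegral.integral_const_mul, h1, h2] at h3
  have h5 : α / 2 * ∑ k ∈ Finset.range N, (b k)^2 ≤ ∫ t in (0:ℝ)..α, (g' t)^2 := by linarith
  calc _ = 2 / α * (α / 2 * ∑ k ∈ Finset.range N, (b k)^2) := by field_simp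
    _ ≤ _ := by gcongr

theorem aux_ibp (α : ℝ) (hα : 0 < α) (g g' : ℝ → ℝ)
    (hftc : ∀ x ∈ Set.Icc (0:ℝ) α, ∀ y ∈ Set.Icc (0:ℝ) α,
      g y - g x = ∫ t in x..y, g' t)
    (hg'1 : IntervalIntegrable g' volume 0 α) (k : ℕ) (hk : k ≠ 0) :
    ∫ t in (0:ℝ)..α, g t * Real.cos (k * (π / α) * t)
      = - (1 / (k * (π / α))) * ∫ t in (0:ℝ)..α, g' t * Real.sin (k * (π / α) * t) := by
  have hc : (k : ℝ) * (π / α) ≠ 0 := by positivity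
  set c : ℝ := k * (π / α) with hcdef
  have hF := hg'1.absolutelyContinuousOnInterval_intervalIntegral (c := 0) (by simp)
  have hs : AbsolutelyContinuousOnInterval (fun t => Real.sin (c * t)) 0 α :=
    ContDiffOn.absolutelyContinuousOnInterval (by fun_prop)
  have h := hF.integral_mul_deriv_eq_deriv_mul hs
  have hd : deriv (fun t => Real.sin (c * t)) = fun t => c * Real.cos (c * t) := by
    ext t
    have : HasDerivAt (fun t => Real.sin (c * t)) (Real.cos (c * t) * (c * 1)) t :=
      (Real.hasDerivAt_sin _).comp t ((hasDerivAt_id t).const_mul c)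
    rw [this.deriv]; ring
  have hsα : Real.sin (c * α) = 0 := by
    rw [show c * α = k * π by rw [hcdef]; field_simp]
    exact Real.sin_nat_mul_pi k
  have hd2 : ∫ x in (0:ℝ)..α, deriv (fun x => ∫ t in (0:ℝ)..x, g' t) x * Real.sin (c * x)
      = ∫ x in (0:ℝ)..α, g' x * Real.sin (c * x) := by
    apply intervalIntegral.integral_congr_ae
    filter_upwards [hg'1.ae_hasDerivAt_integral] with x hx hx2
    rw [(hx (uIoc_subset_uIcc hx2) 0 (by simp)).deriv]
  rw [hd2, hsα, hd] at h
  simp only [mul_zero, sub_self, intervalIntegral.integral_same, zero_mul, zero_sub] at h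
  have hcos : ∫ t in (0:ℝ)..α, Real.cos (c * t) = 0 := by
    have := aux_cos_int α hα k (by exact_mod_cast hk)
    simpa [hcdef] using this
  have h6 : ∫ t in (0:ℝ)..α, g t * Real.cos (c * t) = ∫ t in (0:ℝ)..α,
      (g 0 * Real.cos (c * t) + (1 / c) * ((∫ s in (0:ℝ)..t, g' s) * (c * Real.cos (c * t)))) := by
    apply intervalIntegral.integral_congr
    intro t ht
    rw [uIcc_of_le hα.le] at ht
    have := hftc 0 ⟨le_rfl, hα.le⟩ t ht
    simp only
    rw [← this]; field_simp; ring
  rw [h6, intervalIntegral.integral_add, intervalIntegral.integral_const_mul,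
    intervalIntegral.integral_const_mul, hcos, h]
  · ring
  · exact Continuous.intervalIntegrable (by fun_prop) _ _
  · apply ContinuousOn.intervalIntegrable
    exact continuousOn_const.mul (hF.continuousOn.mul (by fun_prop))

theorem aux_even_coeff (α : ℝ) (hα : 0 < α) (g : ℝ → ℝ) (hg : ContinuousOn g (Icc 0 α)) (n : ℤ) :
    ∫ x in (-α)..α, Complex.exp (-(n * (π / α) * x) * Complex.I) * ((g |x| : ℝ) : ℂ)
      = ((2 * ∫ x in (0:ℝ)..α, g x * Real.cos (n * (π / α) * x) : ℝ) : ℂ) := by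
  have hcont : ContinuousOn (fun x : ℝ =>
      Complex.exp (-(n * (π / α) * x) * Complex.I) * ((g |x| : ℝ) : ℂ)) (Icc (-α) α) := by
    apply ContinuousOn.mul (by fun_prop)
    apply Complex.continuous_ofReal.comp_continuousOn
    apply hg.comp (by fun_prop)
    intro x hx
    exact ⟨abs_nonneg _, abs_le.2 hx⟩
  have hi1 : IntervalIntegrable (fun x : ℝ =>
      Complex.exp (-(n * (π / α) * x) * Complex.I) * ((g |x| : ℝ) : ℂ)) volume (-α) 0 := by
    apply ContinuousOn.intervalIntegrable
    rw [uIcc_of_le (by linarith)]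
    exact hcont.mono (Icc_subset_Icc le_rfl hα.le)
  have hi2 : IntervalIntegrable (fun x : ℝ =>
      Complex.exp (-(n * (π / α) * x) * Complex.I) * ((g |x| : ℝ) : ℂ)) volume 0 α := by
    apply ContinuousOn.intervalIntegrable
    rw [uIcc_of_le (by linarith)]
    exact hcont.mono (Icc_subset_Icc (by linarith) le_rfl)
  rw [← intervalIntegral.integral_add_adjacent_intervals hi1 hi2]
  have h1 := intervalIntegral.integral_comp_neg (a := 0) (b := α) (fun x : ℝ =>
      Complex.exp (-(n * (π / α) * x) * Complex.I) * ((g |x| : ℝ) : ℂ))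
  rw [neg_zero] at h1
  have hi3 := hi1.symm
  rw [← h1, ← intervalIntegral.integral_add _ hi2, ← intervalIntegral.integral_const_mul,
    ← intervalIntegral.integral_ofReal]
  · apply intervalIntegral.integral_congr
    intro x hx
    rw [uIcc_of_le hα.le] at hx
    simp only [abs_neg, abs_of_nonneg hx.1]
    push_cast
    rw [Complex.cos]
    ring_nf
  · apply ContinuousOn.intervalIntegrable
    rw [uIcc_of_le (by linarith)]
    apply hcont.comp (by fun_prop)
    intro x hx
    constructor <;> linarith [hx.1, hx.2]

theorem aux_pointwise (α : ℝ) (hα : 0 < α) (g : ℝ → ℝ) (hg : ContinuousOn g (Icc 0 α))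
    (c : ℤ → ℝ) (hc : ∀ n : ℤ, c n = (1 / α) * ∫ x in (0:ℝ)..α, g x * Real.cos (n * (π / α) * x))
    (hs : Summable c) (θ : ℝ) (hθ : θ ∈ Icc 0 α) :
    HasSum (fun n : ℤ => c n * Real.cos (n * (π / α) * θ)) (g θ) := by
  have : Fact (0 < 2 * α) := ⟨by linarith⟩
  set f : ℝ → ℂ := fun x => ((g |x| : ℝ) : ℂ) with hf
  have hcont : ContinuousOn f (Icc (-α) (-α + 2 * α)) := by
    apply Complex.continuous_ofReal.comp_continuousOn
    apply hg.comp (by fun_prop)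
    intro x hx
    exact ⟨abs_nonneg _, abs_le.2 ⟨hx.1, by linarith [hx.2]⟩⟩
  have hend : f (-α) = f (-α + 2 * α) := by
    simp only [hf]; rw [show -α + 2 * α = α by ring, abs_neg]
  let G : C(AddCircle (2 * α), ℂ) := ⟨AddCircle.liftIco (2 * α) (-α) f,
    AddCircle.liftIco_continuous hend hcont⟩
  have hcoef : ∀ n, fourierCoeff G n = ((c n : ℝ) : ℂ) := by
    intro n
    change fourierCoeff (AddCircle.liftIco (2 * α) (-α) f) n = _
    rw [fourierCoeff_liftIco_eq, fourierCoeffOn_eq_integral, hc]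
    have : ∀ x : ℝ, fourier (-n) (x : AddCircle (-α + 2 * α - -α)) • f x =
        Complex.exp (-(n * (π / α) * x) * Complex.I) * ((g |x| : ℝ) : ℂ) := by
      intro x
      rw [fourier_coe_apply, smul_eq_mul]
      congr 2
      have : (α : ℂ) ≠ 0 := by exact_mod_cast hα.ne'
      push_cast
      rw [show (-α + 2 * α - -α : ℂ) = 2 * α by ring]
      field_simp
    simp_rw [this]
    rw [show -α + 2 * α = α by ring, aux_even_coeff α hα g hg, Complex.real_smul,
      ← Complex.ofReal_mul]
    congr 1
    field_simp
    ring
  have hsum : Summable (fourierCoeff G) := by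
    have : fourierCoeff G = fun n => ((c n : ℝ) : ℂ) := funext hcoef
    rw [this]
    exact Complex.ofRealCLM.summable hs
  have hθ' : |θ| ≤ α := by rw [abs_of_nonneg hθ.1]; exact hθ.2
  have hval : G (θ : AddCircle (2 * α)) = ((g θ : ℝ) : ℂ) := by
    change AddCircle.liftIco (2 * α) (-α) f θ = _
    rcases lt_or_eq_of_le hθ.2 with h | h
    · rw [AddCircle.liftIco_coe_apply ⟨by linarith [hθ.1], by linarith⟩]
      simp [hf, abs_of_nonneg hθ.1]
    · have : ((θ : ℝ) : AddCircle (2 * α)) = ((-α : ℝ) : AddCircle (2 * α)) := by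
        rw [h, ← AddCircle.coe_add_period (2 * α) (-α)]
        congr 1; ring
      rw [this, AddCircle.liftIco_coe_apply ⟨le_rfl, by linarith⟩]
      simp [hf, h, abs_of_pos hα]
  have hP := has_pointwise_sum_fourier_series_of_summable hsum (θ : AddCircle (2 * α))
  rw [hval] at hP
  have hR := Complex.hasSum_re hP
  rw [Complex.ofReal_re] at hR
  convert hR using 2 with n
  rw [hcoef, fourier_coe_apply, smul_eq_mul, Complex.re_ofReal_mul]
  have : (2 * π * Complex.I * n * θ / (2 * α : ℝ) : ℂ)
      = ((n * (π / α) * θ : ℝ) : ℂ) * Complex.I := by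
    have : (α : ℂ) ≠ 0 := by exact_mod_cast hα.ne'
    push_cast
    field_simp
  rw [this, Complex.exp_ofReal_mul_I_re]

theorem aux_fourier (α : ℝ) (hα : 0 < α) (g g' : ℝ → ℝ)
    (hftc : ∀ x ∈ Set.Icc (0:ℝ) α, ∀ y ∈ Set.Icc (0:ℝ) α,
      g y - g x = ∫ t in x..y, g' t)
    (hg'1 : IntervalIntegrable g' volume 0 α)
    (hg'2 : IntervalIntegrable (fun t => (g' t)^2) volume 0 α) :
    ∃ A : ℕ → ℝ, Summable (fun k => |A k|) ∧
      (∀ θ ∈ Icc 0 α, HasSum (fun k : ℕ => A k * Real.cos (k * (π / α) * θ)) (g θ)) ∧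
      ∀ N : ℕ, ∑ k ∈ Finset.range N, (k : ℝ)^2 * (A k)^2
        ≤ (2 * α / π^2) * ∫ t in (0:ℝ)..α, (g' t)^2 := by
  have hg : ContinuousOn g (Icc 0 α) := by
    have hF := (hg'1.absolutelyContinuousOnInterval_intervalIntegral (c := 0) (by simp)).continuousOn
    rw [uIcc_of_le hα.le] at hF
    refine (continuousOn_const (c := g 0) |>.add hF).congr ?_
    intro t ht
    have := hftc 0 ⟨le_rfl, hα.le⟩ t ht
    simp only [Pi.add_apply]
    linarith
  set c : ℤ → ℝ := fun n => (1 / α) * ∫ x in (0:ℝ)..α, g x * Real.cos (n * (π / α) * x) with hc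
  set b : ℕ → ℝ := fun k => (2 / α) * ∫ t in (0:ℝ)..α, g' t * Real.sin (k * (π / α) * t) with hb
  have hbes := aux_bessel α hα g' hg'1 hg'2 b (fun k => rfl)
  have hbsum : Summable (fun k => (b k)^2) :=
    summable_of_sum_range_le (fun k => sq_nonneg _) hbes
  have hcb : ∀ k : ℕ, k ≠ 0 → 2 * c k = -(α / π) * (b k / k) := by
    intro k hk
    have h := aux_ibp α hα g g' hftc hg'1 k hk
    simp only [hc, hb, Int.cast_natCast]
    rw [h]
    field_simp
  have hneg : ∀ n : ℤ, c (-n) = c n := by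
    intro n
    simp only [hc]
    congr 2
    ext x
    push_cast
    rw [show -(n:ℝ) * (π / α) * x = -(n * (π / α) * x) by ring, Real.cos_neg]
  have hsn : Summable (fun k : ℕ => c k) := by
    have h2 : Summable (fun k : ℕ => (α / π) * ((b k)^2 + 1 / (k:ℝ)^2)) :=
      (hbsum.add (Real.summable_one_div_nat_pow.2 (by norm_num))).mul_left _
    rw [← summable_nat_add_iff 1] at h2 ⊢
    refine Summable.of_norm_bounded h2 fun k => ?_
    have h3 := hcb (k + 1) (by omega)
    have hk : (0:ℝ) < ((k + 1 : ℕ) : ℝ) := by positivity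
    have h4 : c ((k + 1 : ℕ) : ℤ) = -(α / π) * (b (k+1) / ((k + 1 : ℕ) : ℝ) / 2) := by linarith
    rw [h4, Real.norm_eq_abs, abs_mul, abs_neg, abs_of_pos (by positivity : 0 < α / π)]
    gcongr
    rw [abs_le]
    have h5 : b (k+1) / ((k + 1 : ℕ) : ℝ) = b (k+1) * (1 / ((k + 1 : ℕ) : ℝ)) := by ring
    have h6 : (1 : ℝ) / ((k + 1 : ℕ) : ℝ)^2 = (1 / ((k + 1 : ℕ) : ℝ))^2 := by
      rw [one_div_pow]
    rw [h5, h6]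
    constructor <;> nlinarith [sq_nonneg (b (k+1) + (1 / ((k + 1 : ℕ) : ℝ))),
      sq_nonneg (b (k+1) - (1 / ((k + 1 : ℕ) : ℝ))), sq_nonneg (b (k+1)),
      sq_nonneg (1 / ((k + 1 : ℕ) : ℝ))]
  have hsz : Summable c := by
    apply Summable.of_nat_of_neg hsn
    simpa only [hneg] using hsn
  refine ⟨fun k => if k = 0 then c 0 else 2 * c k, ?_, ?_, ?_⟩
  · refine Summable.of_nonneg_of_le (fun k => abs_nonneg _) (fun k => ?_) (hsn.abs.mul_left 2)
    beta_reduce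
    split_ifs with h
    · subst h; simp only [Nat.cast_zero]; linarith [abs_nonneg (c 0)]
    · rw [abs_mul]; simp
  · intro θ hθ
    have h1 := (aux_pointwise α hα g hg c (fun _ => rfl) hsz θ hθ).nat_add_neg
    have h2 := h1.sub (hasSum_ite_eq (0:ℕ) (c 0))
    simp only [Int.cast_zero, zero_mul, Real.cos_zero, mul_one, add_sub_cancel_right] at h2
    refine h2.congr_fun fun k => ?_
    beta_reduce
    by_cases hk : k = 0
    · subst hk; simp
    · simp only [hk, if_false, hneg]
      push_cast
      rw [show -(k:ℝ) * (π / α) * θ = -(k * (π / α) * θ) by ring, Real.cos_neg]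
      ring
  · intro N
    calc _ ≤ ∑ k ∈ Finset.range N, (α / π)^2 * (b k)^2 := by
          refine Finset.sum_le_sum fun k _ => ?_
          by_cases hk : k = 0
          · subst hk; simp only [Nat.cast_zero]; simp; positivity
          · simp only [hk, if_false, hcb k hk]
            apply le_of_eq; field_simp
      _ = (α / π)^2 * ∑ k ∈ Finset.range N, (b k)^2 := by rw [Finset.mul_sum]
      _ ≤ (α / π)^2 * ((2 / α) * ∫ t in (0:ℝ)..α, (g' t)^2) := by gcongr; exact hbes N
      _ = _ := by field_simp

/-- rotated sector in the complex plane -/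
def auxV (α : ℝ) : Set ℂ := {z | ‖z‖ < 1 ∧ Real.cos (α / 2) * ‖z‖ < z.re}

/-- conformal map of the rotated sector on the upper half disc -/
noncomputable def auxW (α : ℝ) (z : ℂ) : ℂ := Complex.I * z ^ (((π / α : ℝ)) : ℂ)

/-- terms of the series -/
noncomputable def auxT (α : ℝ) (A : ℕ → ℝ) (k : ℕ) (z : ℂ) : ℂ := (A k : ℂ) * auxW α z ^ k

theorem auxV_open (α : ℝ) : IsOpen (auxV α) := by
  exact (isOpen_lt (f := fun z : ℂ => ‖z‖) (g := fun _ => (1:ℝ)) (by fun_prop)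
    (by fun_prop)).inter (isOpen_lt (f := fun z : ℂ => Real.cos (α / 2) * ‖z‖)
      (g := fun z : ℂ => z.re) (by fun_prop) Complex.continuous_re)

theorem aux_neg_one_lt_cos (α : ℝ) (hα : 0 < α) (hα2 : α < 2 * π) : -1 < Real.cos (α / 2) := by
  rw [← Real.cos_pi]
  exact Real.cos_lt_cos_of_nonneg_of_le_pi (by linarith) le_rfl (by linarith)

theorem aux_slit (α : ℝ) (hα : 0 < α) (hα2 : α < 2 * π) (z : ℂ) (hz : z ≠ 0)
    (h : Real.cos (α / 2) * ‖z‖ ≤ z.re) : z ∈ Complex.slitPlane := by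
  rw [Complex.mem_slitPlane_iff]
  by_contra! hcon
  have hn : ‖z‖ = -z.re := by
    have : z = ((z.re : ℝ) : ℂ) := Complex.ext (by simp) (by simp [hcon.2])
    rw [this, Complex.norm_real, Real.norm_eq_abs, abs_of_nonpos hcon.1]; simp
  have := aux_neg_one_lt_cos α hα hα2
  have hp : 0 < ‖z‖ := norm_pos_iff.2 hz
  nlinarith

theorem auxV_ne (α : ℝ) (z : ℂ) (h : z ∈ auxV α) : z ≠ 0 := by
  rintro rfl
  simpa using h.2

theorem auxV_slit (α : ℝ) (hα : 0 < α) (hα2 : α < 2 * π) (z : ℂ) (h : z ∈ auxV α) :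
    z ∈ Complex.slitPlane := aux_slit α hα hα2 z (auxV_ne α z h) h.2.le

theorem auxV_polar (α : ℝ) (hα : 0 < α) (hα2 : α < 2 * π) (ρ φ : ℝ) (hρ : 0 < ρ)
    (hφ : φ ∈ Ioo (-π) π) :
    ((ρ : ℂ) * Complex.exp (φ * Complex.I)) ∈ auxV α ↔ ρ < 1 ∧ φ ∈ Ioo (-(α/2)) (α/2) := by
  have hn : ‖(ρ : ℂ) * Complex.exp (φ * Complex.I)‖ = ρ := by
    rw [norm_mul, Complex.norm_exp_ofReal_mul_I, Complex.norm_real, Real.norm_eq_abs,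
      abs_of_pos hρ, mul_one]
  have hr : ((ρ : ℂ) * Complex.exp (φ * Complex.I)).re = ρ * Real.cos φ := by
    rw [Complex.re_ofReal_mul, Complex.exp_ofReal_mul_I_re]
  simp only [auxV, mem_ofPred_eq, hn, hr]
  rw [mul_comm, mul_lt_mul_iff_right₀ hρ, ← Real.cos_abs φ,
    Real.strictAntiOn_cos.lt_iff_gt ⟨by linarith, by linarith⟩
      ⟨abs_nonneg _, (abs_lt.2 hφ).le⟩, abs_lt, mem_Ioo]

theorem auxW_polar (α : ℝ) (hα : 0 < α) (ρ φ : ℝ) (hρ : 0 < ρ) (hφ : φ ∈ Ioo (-π) π) :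
    auxW α ((ρ : ℂ) * Complex.exp (φ * Complex.I))
      = ((ρ ^ (π / α) : ℝ) : ℂ) * Complex.exp (((π / α) * (φ + α / 2) : ℝ) * Complex.I) := by
  have h1 : (ρ : ℂ) * Complex.exp (φ * Complex.I)
      = Complex.exp ((Real.log ρ : ℝ) + φ * Complex.I) := by
    rw [Complex.exp_add, ← Complex.ofReal_exp, Real.exp_log hρ]
  have h2 : Complex.log ((ρ : ℂ) * Complex.exp (φ * Complex.I))
      = (Real.log ρ : ℝ) + φ * Complex.I := by
    rw [h1, Complex.log_exp]
    · simp [hφ.1]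
    · simp [hφ.2.le]
  have h0 : (ρ : ℂ) * Complex.exp (φ * Complex.I) ≠ 0 := by
    rw [h1]; exact Complex.exp_ne_zero _
  have hI : Complex.I = Complex.exp (((π / 2 : ℝ) : ℂ) * Complex.I) := by
    rw [Complex.exp_mul_I, ← Complex.ofReal_cos, ← Complex.ofReal_sin]; simp
  rw [auxW, Complex.cpow_def_of_ne_zero h0, h2, Real.rpow_def_of_pos hρ, Complex.ofReal_exp,
    ← Complex.exp_add]
  nth_rewrite 1 [hI]
  rw [← Complex.exp_add]
  congr 1
  have : (α : ℂ) ≠ 0 := by exact_mod_cast hα.ne'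
  push_cast
  field_simp
  ring

theorem auxW_norm (α : ℝ) (z : ℂ) : ‖auxW α z‖ = ‖z‖ ^ (π / α) := by
  rw [auxW, norm_mul, Complex.norm_I, one_mul, Complex.norm_cpow_real]

theorem auxT_bound (α : ℝ) (hα : 0 < α) (A : ℕ → ℝ) (k : ℕ) (z : ℂ) (hz : ‖z‖ ≤ 1) :
    ‖auxT α A k z‖ ≤ |A k| := by
  rw [auxT, norm_mul, Complex.norm_real, Real.norm_eq_abs, norm_pow, auxW_norm]
  apply mul_le_of_le_one_right (abs_nonneg _)
  apply pow_le_one₀ (by positivity)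
  exact Real.rpow_le_one (norm_nonneg _) hz (by positivity)

theorem auxW_deriv (α : ℝ) (z : ℂ) (hz : z ∈ Complex.slitPlane) :
    HasDerivAt (auxW α) (((π / α : ℝ) : ℂ) / z * auxW α z) z := by
  have h0 : z ≠ 0 := Complex.slitPlane_ne_zero hz
  have h := ((hasDerivAt_id z).cpow_const (c := ((π / α : ℝ) : ℂ)) hz).const_mul Complex.I
  refine HasDerivAt.congr_deriv (f := auxW α) h ?_
  simp only [auxW, id]
  rw [Complex.cpow_sub _ _ h0, Complex.cpow_one]
  ring

theorem auxT_deriv (α : ℝ) (A : ℕ → ℝ) (k : ℕ) (z : ℂ) (hz : z ∈ Complex.slitPlane) :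
    HasDerivAt (auxT α A k) (((π / α : ℝ) : ℂ) / z * (((k * A k : ℝ) : ℂ) * auxW α z ^ k)) z := by
  have h := ((auxW_deriv α z hz).pow k).const_mul (A k : ℂ)
  refine HasDerivAt.congr_deriv (f := auxT α A k) h ?_
  rcases k with _ | k
  · simp
  · push_cast
    ring

theorem aux_trig (α : ℝ) (hα : 0 < α) (c : ℕ → ℝ) (N : ℕ) :
    ∫ t in (0:ℝ)..α, ‖∑ k ∈ Finset.range N, (c k : ℂ) *
        Complex.exp (((π / α) * t : ℝ) * Complex.I) ^ k‖ ^ 2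
      = α * ∑ k ∈ Finset.range N, (c k) ^ 2 := by
  have h : ∀ t : ℝ, ‖∑ k ∈ Finset.range N, (c k : ℂ) *
        Complex.exp (((π / α) * t : ℝ) * Complex.I) ^ k‖ ^ 2
      = ∑ j ∈ Finset.range N, ∑ k ∈ Finset.range N,
        (c j * c k) * Real.cos (((j - k : ℤ) : ℝ) * (π / α) * t) := by
    intro t
    have hterm : ∀ k : ℕ, (c k : ℂ) * Complex.exp (((π / α) * t : ℝ) * Complex.I) ^ k
        = (c k : ℂ) * Complex.exp (((k * (π / α) * t : ℝ) : ℂ) * Complex.I) := by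
      intro k
      rw [← Complex.exp_nat_mul]
      congr 2
      push_cast
      ring
    simp_rw [hterm]
    rw [← Complex.normSq_eq_norm_sq, Complex.normSq_apply, Complex.re_sum, Complex.im_sum]
    simp_rw [Complex.re_ofReal_mul, Complex.im_ofReal_mul, Complex.exp_ofReal_mul_I_re,
      Complex.exp_ofReal_mul_I_im]
    rw [Finset.sum_mul_sum, Finset.sum_mul_sum, ← Finset.sum_add_distrib]
    refine Finset.sum_congr rfl fun j _ => ?_
    rw [← Finset.sum_add_distrib]
    refine Finset.sum_congr rfl fun k _ => ?_
    push_cast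
    rw [show ((j:ℝ) - k) * (π / α) * t = j * (π / α) * t - k * (π / α) * t by ring,
      Real.cos_sub]
    ring
  simp_rw [h]
  rw [intervalIntegral.integral_finsetSum, Finset.mul_sum]
  · refine Finset.sum_congr rfl fun j hj => ?_
    rw [intervalIntegral.integral_finsetSum]
    · have : ∀ k : ℕ, ∫ t in (0:ℝ)..α, (c j * c k) * Real.cos (((j - k : ℤ) : ℝ) * (π / α) * t)
          = if j = k then α * (c j)^2 else 0 := by
        intro k
        rw [intervalIntegral.integral_const_mul]
        by_cases hjk : j = k
        · subst hjk; simp; ring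
        · rw [aux_cos_int α hα ((j:ℤ) - k) (by omega)]; simp [hjk]
      simp_rw [this]
      simp only [Finset.sum_ite_eq, hj, if_true]
    · intro k _
      exact Continuous.intervalIntegrable (by fun_prop) _ _
  · intro k _
    exact Continuous.intervalIntegrable (by fun_prop) _ _

/-- the derivative of the partial sums -/
noncomputable def auxD (α : ℝ) (A : ℕ → ℝ) (N : ℕ) (z : ℂ) : ℂ :=
  ∑ k ∈ Finset.range N, ((π / α : ℝ) : ℂ) / z * (((k * A k : ℝ) : ℂ) * auxW α z ^ k)

theorem auxD_polar (α : ℝ) (hα : 0 < α) (A : ℕ → ℝ) (N : ℕ) (ρ φ : ℝ) (hρ : 0 < ρ)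
    (hφ : φ ∈ Ioo (-π) π) :
    ‖auxD α A N ((ρ : ℂ) * Complex.exp (φ * Complex.I))‖ ^ 2
      = (π / α / ρ) ^ 2 * ‖∑ k ∈ Finset.range N, ((k * A k * (ρ ^ (π / α)) ^ k : ℝ) : ℂ) *
        Complex.exp (((π / α) * (φ + α / 2) : ℝ) * Complex.I) ^ k‖ ^ 2 := by
  rw [auxD, ← Finset.mul_sum, norm_mul, mul_pow, auxW_polar α hα ρ φ hρ hφ]
  congr 2
  · rw [norm_div, norm_mul, Complex.norm_exp_ofReal_mul_I, mul_one, Complex.norm_real,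
      Complex.norm_real, Real.norm_eq_abs, Real.norm_eq_abs, abs_of_pos hρ,
      abs_of_pos (by positivity)]
  · congr 1
    refine Finset.sum_congr rfl fun k _ => ?_
    push_cast
    ring

theorem auxW_contOn (α : ℝ) : ContinuousOn (auxW α) Complex.slitPlane :=
  fun z hz => (auxW_deriv α z hz).continuousAt.continuousWithinAt

theorem auxD_contOn (α : ℝ) (A : ℕ → ℝ) (N : ℕ) :
    ContinuousOn (auxD α A N) Complex.slitPlane := by
  apply continuousOn_finsetSum
  intro k _
  apply ContinuousOn.mul
  · exact continuousOn_const.div continuousOn_id fun z hz => Complex.slitPlane_ne_zero hz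
  · exact continuousOn_const.mul ((auxW_contOn α).pow k)

theorem aux_rho (α : ℝ) (hα : 0 < α) (A : ℕ → ℝ) (N : ℕ) :
    ∫⁻ ρ in Ioo (0:ℝ) 1, ENNReal.ofReal (ρ * ((π / α / ρ) ^ 2 *
      (α * ∑ k ∈ Finset.range N, (k * A k * (ρ ^ (π / α)) ^ k) ^ 2)))
      = ENNReal.ofReal (π / 2 * ∑ k ∈ Finset.range N, k * (A k)^2) := by
  have hβ : 0 < π / α := by positivity
  set F : ℝ → ℝ := fun ρ => ∑ k ∈ Finset.range N,
    ((π^2 / α) * (k * A k)^2) * ρ ^ (2 * (π / α) * k - 1) with hF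
  have hii : ∀ k : ℕ, IntervalIntegrable
      (fun ρ : ℝ => ((π^2 / α) * (k * A k)^2) * ρ ^ (2 * (π / α) * k - 1)) volume 0 1 := by
    intro k
    rcases Nat.eq_zero_or_pos k with hk | hk
    · subst hk; simp
    · apply IntervalIntegrable.const_mul
      apply intervalIntegral.intervalIntegrable_rpow'
      have : (0:ℝ) < k := by exact_mod_cast hk
      have : 0 < 2 * (π / α) * k := by positivity
      linarith
  have hFi : IntervalIntegrable F volume 0 1 := by
    have := IntervalIntegrable.sum (Finset.range N) (fun k _ => hii k)
    have h2 : F = ∑ k ∈ Finset.range N,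
        fun ρ : ℝ => ((π^2 / α) * (k * A k)^2) * ρ ^ (2 * (π / α) * k - 1) := by
      ext ρ
      simp [hF]
    rw [h2]
    exact this
  have hFint : ∫ ρ in (0:ℝ)..1, F ρ = π / 2 * ∑ k ∈ Finset.range N, k * (A k)^2 := by
    rw [hF, intervalIntegral.integral_finsetSum (fun k _ => hii k), Finset.mul_sum]
    refine Finset.sum_congr rfl fun k _ => ?_
    rcases Nat.eq_zero_or_pos k with hk | hk
    · subst hk; simp
    · have hk' : (0:ℝ) < k := by exact_mod_cast hk
      have h0 : 0 < 2 * (π / α) * k := by positivity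
      rw [intervalIntegral.integral_const_mul, integral_rpow (Or.inl (by linarith))]
      rw [sub_add_cancel, Real.one_rpow, Real.zero_rpow h0.ne']
      field_simp
      ring
  have hFnn : ∀ ρ ∈ Ioo (0:ℝ) 1, 0 ≤ F ρ := by
    intro ρ hρ
    apply Finset.sum_nonneg
    intro k _
    have := Real.rpow_nonneg hρ.1.le (2 * (π / α) * k - 1)
    positivity
  have heq : ∀ ρ ∈ Ioo (0:ℝ) 1, ρ * ((π / α / ρ) ^ 2 *
      (α * ∑ k ∈ Finset.range N, (k * A k * (ρ ^ (π / α)) ^ k) ^ 2)) = F ρ := by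
    intro ρ hρ
    have hρ0 := hρ.1
    simp only [hF, Finset.mul_sum]
    refine Finset.sum_congr rfl fun k _ => ?_
    have : ρ ^ (2 * (π / α) * k - 1) = ((ρ ^ (π / α)) ^ k)^2 / ρ := by
      rw [Real.rpow_sub hρ0, Real.rpow_one]
      congr 1
      rw [← pow_mul, ← Real.rpow_natCast, ← Real.rpow_mul hρ0.le]
      congr 1
      push_cast; ring
    rw [this]
    field_simp
  rw [setLIntegral_congr_fun measurableSet_Ioo (fun ρ hρ => by rw [heq ρ hρ]), ← hFint,
    intervalIntegral.integral_of_le zero_le_one, integral_Ioc_eq_integral_Ioo,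
    ofReal_integral_eq_lintegral_ofReal]
  · rw [intervalIntegrable_iff_integrableOn_Ioo_of_le zero_le_one] at hFi
    exact hFi
  · exact (ae_restrict_iff' measurableSet_Ioo).2 (ae_of_all _ hFnn)

theorem aux_phi (α : ℝ) (hα : 0 < α) (c : ℕ → ℝ) (r : ℝ) (hr : 0 ≤ r) (N : ℕ) :
    ∫⁻ φ in Ioo (-(α/2)) (α/2), ENNReal.ofReal (r *
      ‖∑ k ∈ Finset.range N, (c k : ℂ) *
        Complex.exp (((π / α) * (φ + α / 2) : ℝ) * Complex.I) ^ k‖ ^ 2)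
      = ENNReal.ofReal (r * (α * ∑ k ∈ Finset.range N, (c k) ^ 2)) := by
  have h := aux_trig α hα c N
  have h2 := intervalIntegral.integral_comp_add_right (a := -(α/2)) (b := α/2)
    (fun t : ℝ => ‖∑ k ∈ Finset.range N, (c k : ℂ) *
        Complex.exp (((π / α) * t : ℝ) * Complex.I) ^ k‖ ^ 2) (α/2)
  rw [neg_add_cancel, add_halves, h] at h2
  rw [← h2, ← intervalIntegral.integral_const_mul,
    intervalIntegral.integral_of_le (by linarith), integral_Ioc_eq_integral_Ioo,
    ofReal_integral_eq_lintegral_ofReal]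
  · apply IntegrableOn.mono_set _ Ioo_subset_Icc_self
    apply ContinuousOn.integrableOn_Icc
    fun_prop
  · exact ae_of_all _ fun φ => by positivity

theorem aux_energyN (α : ℝ) (hα : 0 < α) (hα2 : α < 2 * π) (A : ℕ → ℝ) (N : ℕ) :
    ∫⁻ z in auxV α, ENNReal.ofReal (‖auxD α A N z‖ ^ 2)
      = ENNReal.ofReal (π / 2 * ∑ k ∈ Finset.range N, k * (A k)^2) := by
  rw [← aux_rho α hα A N, ← lintegral_indicator (auxV_open α).measurableSet,
    ← Complex.lintegral_comp_polarCoord_symm]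
  set H : ℝ × ℝ → ENNReal := fun p => ENNReal.ofReal ((p.1 * (π / α / p.1) ^ 2) *
    ‖∑ k ∈ Finset.range N, ((k * A k * (p.1 ^ (π / α)) ^ k : ℝ) : ℂ) *
        Complex.exp (((π / α) * (p.2 + α / 2) : ℝ) * Complex.I) ^ k‖ ^ 2) with hH
  have hsub : Ioo (0:ℝ) 1 ×ˢ Ioo (-(α/2)) (α/2) ⊆ polarCoord.target := by
    intro p hp
    rw [polarCoord_target]
    exact ⟨hp.1.1, by linarith [hp.2.1], by linarith [hp.2.2]⟩
  have hms : MeasurableSet (Ioo (0:ℝ) 1 ×ˢ Ioo (-(α/2)) (α/2)) :=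
    measurableSet_Ioo.prod measurableSet_Ioo
  have h1 : ∫⁻ p in polarCoord.target, ENNReal.ofReal p.1 •
      (auxV α).indicator (fun z => ENNReal.ofReal (‖auxD α A N z‖ ^ 2))
        (Complex.polarCoord.symm p)
      = ∫⁻ p in polarCoord.target, (Ioo (0:ℝ) 1 ×ˢ Ioo (-(α/2)) (α/2)).indicator H p := by
    apply setLIntegral_congr_fun polarCoord.open_target.measurableSet
    intro p hp
    rw [polarCoord_target] at hp
    have hp1 : 0 < p.1 := hp.1
    have hz : Complex.polarCoord.symm p = (p.1 : ℂ) * Complex.exp (p.2 * Complex.I) := by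
      rw [Complex.polarCoord_symm_apply, Complex.exp_mul_I]
      push_cast; rfl
    beta_reduce
    rw [hz]
    have hiff := auxV_polar α hα hα2 p.1 p.2 hp1 hp.2
    by_cases hm : p ∈ Ioo (0:ℝ) 1 ×ˢ Ioo (-(α/2)) (α/2)
    · rw [indicator_of_mem (hiff.2 ⟨hm.1.2, hm.2⟩), indicator_of_mem hm,
        auxD_polar α hα A N p.1 p.2 hp1 hp.2, smul_eq_mul, ← ENNReal.ofReal_mul hp1.le, hH]
      simp only [mul_assoc]
    · rw [indicator_of_notMem hm, indicator_of_notMem, smul_zero]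
      intro hc
      obtain ⟨h2, h3⟩ := hiff.1 hc
      exact hm ⟨⟨hp1, h2⟩, h3⟩
  rw [h1, setLIntegral_indicator hms, inter_eq_left.2 hsub, Measure.volume_eq_prod,
    setLIntegral_prod]
  · apply setLIntegral_congr_fun measurableSet_Ioo
    intro ρ hρ
    have hρ0 : 0 < ρ := hρ.1
    simp only [hH]
    rw [aux_phi α hα (fun k => k * A k * (ρ ^ (π / α)) ^ k) _ (by positivity)]
    congr 1
    ring
  · apply AEMeasurable.ennreal_ofReal
    apply ContinuousOn.aemeasurable _ hms
    have hc1 : ∀ p ∈ Ioo (0:ℝ) 1 ×ˢ Ioo (-(α/2)) (α/2), p.1 ≠ 0 := fun p hp => hp.1.1.ne'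
    have hc2 : ContinuousOn (fun p : ℝ × ℝ => p.1 ^ (π / α))
        (Ioo (0:ℝ) 1 ×ˢ Ioo (-(α/2)) (α/2)) :=
      continuousOn_fst.rpow_const fun p hp => Or.inl (hc1 p hp)
    apply ContinuousOn.mul
    · exact continuousOn_fst.mul ((continuousOn_const.div continuousOn_fst hc1).pow 2)
    · apply ContinuousOn.pow
      apply ContinuousOn.norm
      apply continuousOn_finsetSum
      intro k _
      apply ContinuousOn.mul
      · apply Complex.continuous_ofReal.comp_continuousOn
        exact continuousOn_const.mul (hc2.pow k)
      · fun_prop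

/-- the holomorphic function -/
noncomputable def auxF (α : ℝ) (A : ℕ → ℝ) (z : ℂ) : ℂ := ∑' k, auxT α A k z

theorem auxF_diff (α : ℝ) (hα : 0 < α) (hα2 : α < 2 * π) (A : ℕ → ℝ)
    (hA : Summable (fun k => |A k|)) : DifferentiableOn ℂ (auxF α A) (auxV α) :=
  Complex.differentiableOn_tsum_of_summable_norm hA
    (fun k z hz => (auxT_deriv α A k z
      (auxV_slit α hα hα2 z hz)).differentiableAt.differentiableWithinAt)
    (auxV_open α) (fun k z hz => auxT_bound α hα A k z hz.1.le)

theorem auxF_tendsto (α : ℝ) (hα : 0 < α) (hα2 : α < 2 * π) (A : ℕ → ℝ)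
    (hA : Summable (fun k => |A k|)) (z : ℂ) (hz : z ∈ auxV α) :
    Filter.Tendsto (fun N => auxD α A N z) Filter.atTop (nhds (deriv (auxF α A) z)) := by
  have h := Complex.hasSum_deriv_of_summable_norm hA
    (fun k z hz => (auxT_deriv α A k z
      (auxV_slit α hα hα2 z hz)).differentiableAt.differentiableWithinAt)
    (auxV_open α) (fun k z hz => auxT_bound α hα A k z hz.1.le) hz
  have h2 := h.tendsto_sum_nat
  refine h2.congr fun N => ?_
  exact Finset.sum_congr rfl fun k _ => (auxT_deriv α A k z (auxV_slit α hα hα2 z hz)).deriv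

theorem aux_energy (α : ℝ) (hα : 0 < α) (hα2 : α < 2 * π) (A : ℕ → ℝ)
    (hA : Summable (fun k => |A k|)) (C : ℝ)
    (hC : ∀ N, π / 2 * ∑ k ∈ Finset.range N, k * (A k)^2 ≤ C) :
    ∫⁻ z in auxV α, ENNReal.ofReal (‖deriv (auxF α A) z‖ ^ 2) ≤ ENNReal.ofReal C := by
  have h1 : ∫⁻ z in auxV α, ENNReal.ofReal (‖deriv (auxF α A) z‖ ^ 2)
      = ∫⁻ z in auxV α, Filter.liminf (fun N => ENNReal.ofReal (‖auxD α A N z‖ ^ 2))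
        Filter.atTop := by
    apply setLIntegral_congr_fun (auxV_open α).measurableSet
    intro z hz
    have := auxF_tendsto α hα hα2 A hA z hz
    exact ((ENNReal.continuous_ofReal.tendsto _).comp ((this.norm).pow 2)).liminf_eq.symm
  rw [h1]
  refine (lintegral_liminf_le' fun N => ?_).trans ?_
  · apply AEMeasurable.ennreal_ofReal
    apply ContinuousOn.aemeasurable _ (auxV_open α).measurableSet
    exact (((auxD_contOn α A N).mono fun z hz => auxV_slit α hα hα2 z hz).norm).pow 2
  · apply Filter.liminf_le_of_le
    · isBoundedDefault
    · intro b hb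
      obtain ⟨N, hN⟩ := hb.exists
      refine hN.trans ?_
      rw [aux_energyN α hα hα2]
      exact ENNReal.ofReal_le_ofReal (hC N)

theorem auxF_cont (α : ℝ) (hα : 0 < α) (hα2 : α < 2 * π) (A : ℕ → ℝ)
    (hA : Summable (fun k => |A k|)) :
    ContinuousOn (auxF α A) {z | ‖z‖ ≤ 1 ∧ Real.cos (α / 2) * ‖z‖ ≤ z.re} := by
  apply continuousOn_tsum _ hA (fun k z hz => auxT_bound α hα A k z hz.1)
  intro k
  apply continuousOn_const.mul
  apply ContinuousOn.pow
  intro z hz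
  apply ContinuousAt.continuousWithinAt
  by_cases h0 : z = 0
  · have hc : ContinuousAt (fun z : ℂ => z ^ (((π / α : ℝ)) : ℂ)) z := by
      apply Complex.continuousAt_cpow_const_of_re_pos
      · left; simp [h0]
      · rw [Complex.ofReal_re]; positivity
    exact continuousAt_const.mul hc
  · exact (auxW_deriv α z (aux_slit α hα hα2 z h0 hz.2)).continuousAt

/-- identification of the plane with the complex numbers, followed by a rotation -/
noncomputable def auxL (α : ℝ) : EuclideanSpace ℝ (Fin 2) ≃ₗᵢ[ℝ] ℂ :=
  Complex.orthonormalBasisOneI.repr.symm.trans (rotation (Circle.exp (-(α / 2))))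

theorem auxL_apply (α : ℝ) (x : EuclideanSpace ℝ (Fin 2)) :
    auxL α x = Complex.exp (((-(α / 2) : ℝ) : ℂ) * Complex.I) * (x 0 + x 1 * Complex.I) := by
  have h : auxL α x = rotation (Circle.exp (-(α / 2)))
      (Complex.orthonormalBasisOneI.repr.symm x) := rfl
  rw [h, rotation_apply, Circle.coe_exp, Complex.orthonormalBasisOneI_repr_symm_apply]

theorem auxL_polar (α ρ θ : ℝ) :
    auxL α ((WithLp.equiv 2 (Fin 2 → ℝ)).symm ![ρ * Real.cos θ, ρ * Real.sin θ])
      = (ρ : ℂ) * Complex.exp (((θ - α / 2 : ℝ) : ℂ) * Complex.I) := by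
  rw [auxL_apply]
  have : Complex.exp (((θ - α / 2 : ℝ) : ℂ) * Complex.I)
      = Complex.exp (((-(α / 2) : ℝ) : ℂ) * Complex.I) * Complex.exp ((θ : ℂ) * Complex.I) := by
    rw [← Complex.exp_add]; congr 1; push_cast; ring
  rw [this, Complex.exp_mul_I (θ : ℂ)]
  simp
  ring

theorem aux_sector (α : ℝ) (hα : 0 < α) (hα2 : α < 2 * π) :
    sector α = (auxL α) ⁻¹' (auxV α) := by
  ext x
  constructor
  · rintro ⟨ρ, hρ, θ, hθ, rfl⟩
    rw [mem_preimage, auxL_polar, auxV_polar α hα hα2 _ _ hρ.1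
      ⟨by linarith [hθ.1], by linarith [hθ.2]⟩]
    exact ⟨hρ.2, by linarith [hθ.1], by linarith [hθ.2]⟩
  · intro hx
    rw [mem_preimage] at hx
    set z := auxL α x with hz
    have hz0 := auxV_ne α z hx
    have hsl := auxV_slit α hα hα2 z hx
    have harg : Complex.arg z ∈ Ioo (-π) π :=
      ⟨Complex.neg_pi_lt_arg z, lt_of_le_of_ne (Complex.arg_le_pi z)
        (Complex.mem_slitPlane_iff_arg.1 hsl).1⟩
    have hpol := Complex.norm_mul_exp_arg_mul_I z
    have hx2 := hx
    rw [← hpol, auxV_polar α hα hα2 _ _ (norm_pos_iff.2 hz0) harg] at hx2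
    refine ⟨‖z‖, ⟨norm_pos_iff.2 hz0, hx2.1⟩, Complex.arg z + α / 2,
      ⟨by linarith [hx2.2.1], by linarith [hx2.2.2]⟩, ?_⟩
    apply (auxL α).injective
    rw [auxL_polar, ← hz, add_sub_cancel_right, hpol]

theorem aux_closure (α : ℝ) (hα : 0 < α) (hα2 : α < 2 * π) (x : EuclideanSpace ℝ (Fin 2))
    (hx : x ∈ closure (sector α)) :
    auxL α x ∈ {z : ℂ | ‖z‖ ≤ 1 ∧ Real.cos (α / 2) * ‖z‖ ≤ z.re} := by
  have hcl : IsClosed {z : ℂ | ‖z‖ ≤ 1 ∧ Real.cos (α / 2) * ‖z‖ ≤ z.re} :=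
    (isClosed_le (f := fun z : ℂ => ‖z‖) (g := fun _ => (1:ℝ)) (by fun_prop)
    (by fun_prop)).inter (isClosed_le (f := fun z : ℂ => Real.cos (α / 2) * ‖z‖)
      (g := fun z : ℂ => z.re) (by fun_prop) Complex.continuous_re)
  have hcl2 := hcl.preimage (auxL α).continuous
  refine closure_minimal ?_ hcl2 hx
  rw [aux_sector α hα hα2]
  intro y hy
  exact ⟨hy.1.le, hy.2.le⟩

/-- a real linear functional -/
noncomputable def auxR (α : ℝ) (c : ℂ) : EuclideanSpace ℝ (Fin 2) →L[ℝ] ℝ :=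
  Complex.reCLM.comp ((ContinuousLinearMap.mul ℝ ℂ c).comp
    (auxL α).toContinuousLinearEquiv.toContinuousLinearMap)

theorem auxR_apply (α : ℝ) (c : ℂ) (e : EuclideanSpace ℝ (Fin 2)) :
    auxR α c e = (c * auxL α e).re := rfl

theorem auxR_norm (α : ℝ) (c : ℂ) : ‖auxR α c‖ ≤ ‖c‖ := by
  apply ContinuousLinearMap.opNorm_le_bound _ (norm_nonneg _)
  intro e
  rw [auxR_apply, Real.norm_eq_abs]
  refine (Complex.abs_re_le_norm _).trans ?_
  rw [norm_mul, (auxL α).norm_map]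

theorem aux_hasFDeriv (α : ℝ) (f : ℂ → ℂ) (x : EuclideanSpace ℝ (Fin 2)) (c : ℂ)
    (h : HasDerivAt f c (auxL α x)) :
    HasFDerivAt (fun y => (f (auxL α y)).re) (auxR α c) x := by
  have h1 : HasFDerivAt f (ContinuousLinearMap.mul ℝ ℂ c) (auxL α x) := by
    have := h.hasFDerivAt.restrictScalars ℝ
    refine this.congr_fderiv ?_
    ext y
    simp [mul_comm]
  have h2 := h1.comp x (auxL α).toContinuousLinearEquiv.toContinuousLinearMap.hasFDerivAt
  exact Complex.reCLM.hasFDerivAt.comp x h2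

/-- every `g ∈ W^{1,2}((0,α))` on the boundary arc `{ρ = 1, 0 ≤ θ ≤ α}`
of the sector `V` (with `0 < α < 2π`) admits a harmonic extension `v ∈ W^{1,2}(V)`
with `∫_V |∇v|² ≤ (α/π) ∫₀^α |g′|²`. -/
theorem stmt1 (α : ℝ) (hα : 0 < α) (hα2 : α < 2*π)
    (g g' : ℝ → ℝ)
    (hftc : ∀ x ∈ Set.Icc (0:ℝ) α, ∀ y ∈ Set.Icc (0:ℝ) α,
      g y - g x = ∫ t in x..y, g' t)
    (hg'1 : IntervalIntegrable g' volume 0 α)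
    (hg'2 : IntervalIntegrable (fun t => (g' t)^2) volume 0 α) :
    ∃ v : EuclideanSpace ℝ (Fin 2) → ℝ,
      ContinuousOn v (closure (sector α)) ∧
      ContDiffOn ℝ 2 v (sector α) ∧
      (∀ x ∈ sector α,
        (fderiv ℝ (fun z => fderiv ℝ v z (EuclideanSpace.single 0 1)) x)
            (EuclideanSpace.single 0 1)
          + (fderiv ℝ (fun z => fderiv ℝ v z (EuclideanSpace.single 1 1)) x)
            (EuclideanSpace.single 1 1) = 0) ∧
      (∀ θ ∈ Set.Icc (0:ℝ) α, v ((WithLp.equiv 2 (Fin 2 → ℝ)).symm ![Real.cos θ, Real.sin θ]) = g θ) ∧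
      IntegrableOn (fun x => (v x)^2) (sector α) volume ∧
      IntegrableOn (fun x => ‖fderiv ℝ v x‖^2) (sector α) volume ∧
      (∫ x in sector α, ‖fderiv ℝ v x‖^2) ≤ (α/π) * ∫ θ in (0:ℝ)..α, (g' θ)^2 := by
  obtain ⟨A, hA, hAg, hAE⟩ := aux_fourier α hα g g' hftc hg'1 hg'2
  have hsec := aux_sector α hα hα2
  have hopen : IsOpen (sector α) := by
    rw [hsec]; exact (auxV_open α).preimage (auxL α).continuous
  have hdiff := auxF_diff α hα hα2 A hA
  have hmem : ∀ x ∈ sector α, auxL α x ∈ auxV α := fun x hx => by rw [hsec] at hx; exact hx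
  set v : EuclideanSpace ℝ (Fin 2) → ℝ := fun x => (auxF α A (auxL α x)).re with hv
  have hvc : ContinuousOn v (closure (sector α)) := by
    apply Complex.continuous_re.comp_continuousOn
    exact (auxF_cont α hα hα2 A hA).comp (auxL α).continuous.continuousOn
      (fun x hx => aux_closure α hα hα2 x hx)
  have hv2 : ContDiffOn ℝ 2 v (sector α) := by
    have h1 : ContDiffOn ℂ 2 (auxF α A) (auxV α) := hdiff.contDiffOn (auxV_open α)
    have h2 : ContDiffOn ℝ 2 (auxF α A) (auxV α) := h1.restrict_scalars ℝ
    have h3 : ContDiffOn ℝ 2 (fun x => auxF α A (auxL α x)) (sector α) :=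
      h2.comp (auxL α).contDiff.contDiffOn hmem
    exact Complex.reCLM.contDiff.comp_contDiffOn h3
  have hfd : ∀ x ∈ sector α, fderiv ℝ v x = auxR α (deriv (auxF α A) (auxL α x)) := by
    intro x hx
    exact (aux_hasFDeriv α _ x _ ((hdiff.differentiableAt
      ((auxV_open α).mem_nhds (hmem x hx))).hasDerivAt)).fderiv
  have hdd : DifferentiableOn ℂ (deriv (auxF α A)) (auxV α) := hdiff.deriv (auxV_open α)
  have hlap : ∀ x ∈ sector α, ∀ e : EuclideanSpace ℝ (Fin 2),
      fderiv ℝ (fun z => fderiv ℝ v z e) x e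
        = (deriv (deriv (auxF α A)) (auxL α x) * auxL α e * auxL α e).re := by
    intro x hx e
    have heq : (fun z => fderiv ℝ v z e) =ᶠ[nhds x]
        fun y => (deriv (auxF α A) (auxL α y) * auxL α e).re := by
      filter_upwards [hopen.mem_nhds hx] with y hy
      rw [hfd y hy, auxR_apply]
    rw [heq.fderiv_eq]
    have hd := ((hdd.differentiableAt
      ((auxV_open α).mem_nhds (hmem x hx))).hasDerivAt).mul_const (auxL α e)
    rw [(aux_hasFDeriv α (fun z => deriv (auxF α A) z * auxL α e) x _ hd).fderiv, auxR_apply]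
  -- energy
  set E : ℝ := (α/π) * ∫ θ in (0:ℝ)..α, (g' θ)^2 with hE
  have hE0 : 0 ≤ E := by
    apply mul_nonneg (by positivity)
    exact intervalIntegral.integral_nonneg hα.le fun t _ => sq_nonneg _
  have hEN : ∀ N, π / 2 * ∑ k ∈ Finset.range N, k * (A k)^2 ≤ E := by
    intro N
    calc _ ≤ π / 2 * ∑ k ∈ Finset.range N, (k : ℝ)^2 * (A k)^2 := by
          gcongr with k _
          have : (k : ℝ) ≤ ((k^2 : ℕ) : ℝ) := by exact_mod_cast Nat.le_self_pow (by norm_num) k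
          exact_mod_cast this
      _ ≤ π / 2 * ((2 * α / π^2) * ∫ t in (0:ℝ)..α, (g' t)^2) := by gcongr; exact hAE N
      _ = E := by rw [hE]; field_simp
  have hlint : ∫⁻ x in sector α, ENNReal.ofReal (‖fderiv ℝ v x‖^2) ≤ ENNReal.ofReal E := by
    calc _ ≤ ∫⁻ x in sector α, ENNReal.ofReal (‖deriv (auxF α A) (auxL α x)‖^2) := by
          apply setLIntegral_mono' hopen.measurableSet
          intro x hx
          apply ENNReal.ofReal_le_ofReal
          rw [hfd x hx]
          gcongr
          exact auxR_norm α _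
      _ = ∫⁻ z in auxV α, ENNReal.ofReal (‖deriv (auxF α A) z‖^2) := by
          rw [hsec]
          exact (auxL α).measurePreserving.setLIntegral_comp_preimage_emb
            (auxL α).toHomeomorph.measurableEmbedding
            (fun z => ENNReal.ofReal (‖deriv (auxF α A) z‖^2)) (auxV α)
      _ ≤ _ := aux_energy α hα hα2 A hA E hEN
  have hmeas : AEStronglyMeasurable (fun x => ‖fderiv ℝ v x‖^2) (volume.restrict (sector α)) := by
    apply ContinuousOn.aestronglyMeasurable _ hopen.measurableSet
    exact ((hv2.continuousOn_fderiv_of_isOpen hopen (by norm_num)).norm).pow 2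
  have hnn : 0 ≤ᵐ[volume.restrict (sector α)] fun x => ‖fderiv ℝ v x‖^2 :=
    ae_of_all _ fun x => by positivity
  refine ⟨v, hvc, hv2, ?_, ?_, ?_, ?_, ?_⟩
  · intro x hx
    rw [hlap x hx, hlap x hx, ← Complex.add_re]
    have h0 : auxL α (EuclideanSpace.single 0 1)
        = Complex.exp (((-(α / 2) : ℝ) : ℂ) * Complex.I) := by
      rw [auxL_apply]; simp
    have h1 : auxL α (EuclideanSpace.single 1 1)
        = Complex.exp (((-(α / 2) : ℝ) : ℂ) * Complex.I) * Complex.I := by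
      rw [auxL_apply]; simp
    rw [h0, h1]
    set c := Complex.exp (((-(α / 2) : ℝ) : ℂ) * Complex.I)
    set d := deriv (deriv (auxF α A)) (auxL α x)
    have : d * c * c + d * (c * Complex.I) * (c * Complex.I) = 0 := by
      linear_combination d * c * c * Complex.I_sq
    rw [this, Complex.zero_re]
  · intro θ hθ
    have hp := auxL_polar α 1 θ
    simp only [one_mul] at hp
    simp only [hv]
    rw [hp]
    have hT : ∀ k, (auxT α A k (((1:ℝ) : ℂ) * Complex.exp (((θ - α / 2 : ℝ) : ℂ) * Complex.I))).re
        = A k * Real.cos (k * (π / α) * θ) := by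
      intro k
      rw [auxT, auxW_polar α hα 1 (θ - α / 2) one_pos ⟨by linarith [hθ.1], by linarith [hθ.2]⟩,
        Real.one_rpow, Complex.ofReal_one, one_mul, ← Complex.exp_nat_mul, Complex.re_ofReal_mul]
      have : (k : ℂ) * (((π / α * (θ - α / 2 + α / 2) : ℝ) : ℂ) * Complex.I)
          = ((k * (π / α) * θ : ℝ) : ℂ) * Complex.I := by push_cast; ring
      rw [this, Complex.exp_ofReal_mul_I_re]
    have hs : Summable fun k => auxT α A k
        (((1:ℝ) : ℂ) * Complex.exp (((θ - α / 2 : ℝ) : ℂ) * Complex.I)) := by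
      refine Summable.of_norm_bounded hA fun k => auxT_bound α hα A k _ ?_
      rw [norm_mul, Complex.norm_exp_ofReal_mul_I]; simp
    have h1 := Complex.hasSum_re hs.hasSum
    simp_rw [hT] at h1
    have := h1.unique (hAg θ hθ)
    simpa [auxF] using this
  · have hcomp : IsCompact (closure (sector α)) := by
      apply Bornology.IsBounded.isCompact_closure
      refine (Metric.isBounded_closedBall (x := (0 : EuclideanSpace ℝ (Fin 2))) (r := 1)).subset ?_
      intro x hx
      have := (hmem x hx).1
      rw [(auxL α).norm_map] at this
      simpa using this.le
    exact ((hvc.pow 2).integrableOn_compact hcomp).mono_set subset_closure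
  · refine ⟨hmeas, ?_⟩
    rw [hasFiniteIntegral_iff_ofReal hnn]
    exact hlint.trans_lt ENNReal.ofReal_lt_top
  · rw [integral_eq_lintegral_of_nonneg_ae hnn hmeas]
    exact ENNReal.toReal_le_of_le_ofReal hE0 hlint
end

section
/- Let h : [0,3] → ℝ be a nonnegative convex integrable function satisfying the distributional inequality h'' ≥ h on (0,3), and suppose h is not identically zero. There exists a universal constant η ∈ (0,1), independent of h, such that: if ∫₁² h ≥ (1−η)∫₀¹ h, then ∫₂³ h ≥ (1+η)∫₁² h. -/
open Real MeasureTheory Set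

lemma aux_hasDeriv (g : ℝ → ℝ) (hg : Continuous g) (x : ℝ) :
    HasDerivAt (fun x => ∫ t in (0:ℝ)..x, g t) (g x) x :=
  intervalIntegral.integral_hasDerivAt_right (hg.intervalIntegrable _ _)
    hg.aestronglyMeasurable.stronglyMeasurableAtFilter hg.continuousAt

lemma aux_contDiff (g : ℝ → ℝ) (hg : ContDiff ℝ (⊤ : ℕ∞) g) :
    ContDiff ℝ (⊤ : ℕ∞) (fun x => ∫ t in (0:ℝ)..x, g t) := by
  rw [contDiff_infty_iff_deriv]
  refine ⟨fun x => (aux_hasDeriv g hg.continuous x).differentiableAt, ?_⟩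
  have : deriv (fun x => ∫ t in (0:ℝ)..x, g t) = g :=
    funext fun x => (aux_hasDeriv g hg.continuous x).deriv
  rw [this]; exact hg

lemma aux_w : ∃ w : ℝ → ℝ, ContDiff ℝ (⊤ : ℕ∞) w ∧ (∀ x, 0 ≤ w x) ∧ (∀ x, w x ≤ 1) ∧
    (∀ x, x ≤ 5/4 → w x = 0) ∧ (∀ x, 7/4 ≤ x → w x = 0) ∧ w (3/2) = 1 := by
  let f : ContDiffBump (3/2 : ℝ) := ⟨1/8, 1/4, by norm_num, by norm_num⟩
  refine ⟨f, f.contDiff, fun x => f.nonneg, fun x => f.le_one, fun x hx => ?_, fun x hx => ?_, ?_⟩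
  · apply f.zero_of_le_dist
    rw [Real.dist_eq]; show (1/4:ℝ) ≤ _
    rw [abs_of_nonpos (by linarith)]; linarith
  · apply f.zero_of_le_dist
    rw [Real.dist_eq]; show (1/4:ℝ) ≤ _
    rw [abs_of_nonneg (by linarith)]; linarith
  · apply f.one_of_mem_closedBall
    simp [f.rIn_pos.le]

lemma aux_phi_s2 (w : ℝ → ℝ) (hw : ContDiff ℝ (⊤ : ℕ∞) w) (h0 : ∀ x, 0 ≤ w x)
    (hl : ∀ x, x ≤ 5/4 → w x = 0) (hr : ∀ x, 7/4 ≤ x → w x = 0) (h1 : w (3/2) = 1) :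
    ∃ φ : ℝ → ℝ, ContDiff ℝ (⊤ : ℕ∞) φ ∧ HasCompactSupport φ ∧
      tsupport φ ⊆ Set.Ioo (0:ℝ) 3 ∧ (∀ t, 0 ≤ φ t) ∧ (∀ t ∈ Icc (1:ℝ) 2, 0 < φ t) ∧
      ∀ t, deriv (deriv φ) t = w (t+1) - 2 * w t + w (t-1) := by
  set V : ℝ → ℝ := fun x => ∫ t in (0:ℝ)..x, w t with hV
  have hVc : ContDiff ℝ (⊤ : ℕ∞) V := aux_contDiff w hw
  have hVd : ∀ x, HasDerivAt V (w x) x := aux_hasDeriv w hw.continuous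
  set W : ℝ → ℝ := fun x => ∫ t in (0:ℝ)..x, V t with hW
  have hWc : ContDiff ℝ (⊤ : ℕ∞) W := aux_contDiff V hVc
  have hWd : ∀ x, HasDerivAt W (V x) x := aux_hasDeriv V hVc.continuous
  have hsub : ∀ x y, V y - V x = ∫ t in x..y, w t := fun x y =>
    intervalIntegral.integral_interval_sub_left (hw.continuous.intervalIntegrable _ _)
      (hw.continuous.intervalIntegrable _ _)
  have hVcont := hVc.continuous
  have key : ∀ t, W (t+1) - 2 * W t + W (t-1) = ∫ u in (0:ℝ)..1, (V (t+u) - V (t+u-1)) := by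
    intro t
    have hs : ∀ x y, W y - W x = ∫ t in x..y, V t := fun x y =>
      intervalIntegral.integral_interval_sub_left (hVcont.intervalIntegrable _ _)
        (hVcont.intervalIntegrable _ _)
    rw [intervalIntegral.integral_sub
      (Continuous.intervalIntegrable (by fun_prop) _ _)
      (Continuous.intervalIntegrable (by fun_prop) _ _)]
    have e1 : ∫ u in (0:ℝ)..1, V (t+u) = W (t+1) - W t := by
      rw [hs, intervalIntegral.integral_comp_add_left (fun x => V x)]; simp
    have e2 : ∫ u in (0:ℝ)..1, V (t+u-1) = W t - W (t-1) := by
      rw [hs]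
      have : ∀ u, V (t+u-1) = V ((t-1)+u) := fun u => by congr 1; ring
      simp_rw [this]
      rw [intervalIntegral.integral_comp_add_left (fun x => V x)]; simp
    rw [e1, e2]; ring
  have hmono : ∀ x, 0 ≤ V x - V (x-1) := by
    intro x
    rw [hsub]
    exact intervalIntegral.integral_nonneg (by linarith) (fun u _ => h0 u)
  have hzl : ∀ t, t ≤ 1/4 → W (t+1) - 2 * W t + W (t-1) = 0 := by
    intro t ht
    rw [key, intervalIntegral.integral_congr (g := fun _ => (0:ℝ))]
    · simp
    intro u hu
    rw [uIcc_of_le zero_le_one] at hu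
    show V (t+u) - V (t+u-1) = 0
    rw [hsub, intervalIntegral.integral_congr (g := fun _ => (0:ℝ))]
    · simp
    intro x hx
    rw [uIcc_of_le (by linarith)] at hx
    exact hl x (by linarith [hx.2, hu.2])
  have hzr : ∀ t, 11/4 ≤ t → W (t+1) - 2 * W t + W (t-1) = 0 := by
    intro t ht
    rw [key, intervalIntegral.integral_congr (g := fun _ => (0:ℝ))]
    · simp
    intro u hu
    rw [uIcc_of_le zero_le_one] at hu
    show V (t+u) - V (t+u-1) = 0
    rw [hsub, intervalIntegral.integral_congr (g := fun _ => (0:ℝ))]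
    · simp
    intro x hx
    rw [uIcc_of_le (by linarith)] at hx
    exact hr x (by linarith [hx.1, hu.1])
  have hts : tsupport (fun t => W (t+1) - 2 * W t + W (t-1)) ⊆ Icc (1/4) (11/4) := by
    apply closure_minimal _ isClosed_Icc
    intro t ht
    by_contra hc
    rw [mem_Icc, not_and_or] at hc
    rcases hc with hc | hc
    · exact ht (hzl t (by linarith))
    · exact ht (hzr t (by linarith))
  refine ⟨fun t => W (t+1) - 2 * W t + W (t-1), ?_, ?_, ?_, ?_, ?_, ?_⟩
  · have a1 : ContDiff ℝ (⊤ : ℕ∞) (fun t => W (t+1)) := hWc.comp (contDiff_id.add contDiff_const)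
    have a2 : ContDiff ℝ (⊤ : ℕ∞) (fun t => W (t-1)) := hWc.comp (contDiff_id.sub contDiff_const)
    exact (a1.sub (contDiff_const.mul hWc)).add a2
  · exact isCompact_Icc.of_isClosed_subset (isClosed_tsupport _) hts
  · exact hts.trans (Icc_subset_Ioo (by norm_num) (by norm_num))
  · intro t
    show 0 ≤ W (t+1) - 2 * W t + W (t-1)
    rw [key]
    exact intervalIntegral.integral_nonneg zero_le_one (fun u _ => hmono _)
  · intro t ht
    show 0 < W (t+1) - 2 * W t + W (t-1)
    rw [key]
    refine intervalIntegral.integral_pos zero_lt_one (by fun_prop) (fun u _ => hmono _)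
      ⟨2 - t, ⟨by linarith [ht.2], by linarith [ht.1]⟩, ?_⟩
    rw [hsub]
    refine intervalIntegral.integral_pos (by linarith) hw.continuous.continuousOn
      (fun u _ => h0 _) ⟨3/2, ⟨by linarith, by linarith⟩, ?_⟩
    rw [h1]; exact one_pos
  · have d1 : deriv (fun t => W (t+1) - 2 * W t + W (t-1))
        = fun t => V (t+1) - 2 * V t + V (t-1) := by
      funext t
      exact ((((hWd (t+1)).comp_add_const t 1).sub ((hWd t).const_mul 2)).add
        ((hWd (t-1)).comp_sub_const t 1)).deriv
    intro t
    rw [d1]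
    exact ((((hVd (t+1)).comp_add_const t 1).sub ((hVd t).const_mul 2)).add
        ((hVd (t-1)).comp_sub_const t 1)).deriv

/-- three-annuli property. There is a universal `η ∈ (0,1)` such that for
every nonnegative convex integrable `h` on `(0,3)` satisfying `h″ ≥ h` in the sense of
distributions and not identically zero, if `∫₁² h ≥ (1−η) ∫₀¹ h` then
`∫₂³ h ≥ (1+η) ∫₁² h`. -/
theorem stmt2 :
    ∃ η : ℝ, η ∈ Set.Ioo (0:ℝ) 1 ∧
      ∀ h : ℝ → ℝ,
        (∀ t ∈ Set.Ioo (0:ℝ) 3, 0 ≤ h t) →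
        ConvexOn ℝ (Set.Ioo (0:ℝ) 3) h →
        IntegrableOn h (Set.Ioo (0:ℝ) 3) →
        (∀ φ : ℝ → ℝ, ContDiff ℝ (⊤ : ℕ∞) φ → HasCompactSupport φ →
          tsupport φ ⊆ Set.Ioo (0:ℝ) 3 → (∀ t, 0 ≤ φ t) →
          (∫ t in Set.Ioo (0:ℝ) 3, h t * φ t)
            ≤ ∫ t in Set.Ioo (0:ℝ) 3, h t * deriv (deriv φ) t) →
        (∃ t ∈ Set.Ioo (0:ℝ) 3, h t ≠ 0) →
        ((1 - η) * ∫ t in (0:ℝ)..1, h t) ≤ (∫ t in (1:ℝ)..2, h t) →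
        ((1 + η) * ∫ t in (1:ℝ)..2, h t) ≤ (∫ t in (2:ℝ)..3, h t) := by
  obtain ⟨w, hw, hw0, hw1, hwl, hwr, hwm⟩ := aux_w
  obtain ⟨φ, hφ, hφc, hφs, hφ0, hφp, hφd⟩ := aux_phi_s2 w hw hw0 hwl hwr hwm
  obtain ⟨c, hc0, hcφ⟩ : ∃ c, 0 < c ∧ ∀ t ∈ Icc (1:ℝ) 2, c ≤ φ t := by
    obtain ⟨x, hx, hxm⟩ := isCompact_Icc.exists_isMinOn (nonempty_Icc.2 (by norm_num : (1:ℝ) ≤ 2))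
      hφ.continuous.continuousOn
    exact ⟨φ x, hφp x hx, fun t ht => hxm ht⟩
  set η : ℝ := min (1/2) (c/4) with hη
  have hη0 : 0 < η := by positivity
  have hη1 : η ≤ 1/2 := min_le_left _ _
  have hηc : η ≤ c/4 := min_le_right _ _
  refine ⟨η, ⟨hη0, by linarith⟩, ?_⟩
  intro h h0 hconv hint hdist _ hyp
  have hII : IntervalIntegrable h volume 0 3 := by
    rw [intervalIntegrable_iff_integrableOn_Ioo_of_le (by norm_num)]; exact hint
  have i01 : IntervalIntegrable h volume 0 1 := hII.mono_set (by
    rw [uIcc_of_le (by norm_num), uIcc_of_le (by norm_num)]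
    exact Icc_subset_Icc (by norm_num) (by norm_num))
  have i12 : IntervalIntegrable h volume 1 2 := hII.mono_set (by
    rw [uIcc_of_le (by norm_num), uIcc_of_le (by norm_num)]
    exact Icc_subset_Icc (by norm_num) (by norm_num))
  have i23 : IntervalIntegrable h volume 2 3 := hII.mono_set (by
    rw [uIcc_of_le (by norm_num), uIcc_of_le (by norm_num)]
    exact Icc_subset_Icc (by norm_num) (by norm_num))
  have hwc := hw.continuous
  have hφcont := hφ.continuous
  have hd := hdist φ hφ hφc hφs hφ0
  simp_rw [hφd] at hd
  have conv : ∀ f : ℝ → ℝ, ∫ t in Ioo (0:ℝ) 3, f t = ∫ t in (0:ℝ)..3, f t := fun f => by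
    rw [intervalIntegral.integral_of_le (by norm_num), integral_Ioc_eq_integral_Ioo]
  rw [conv, conv] at hd
  -- splitting
  have split : ∀ g : ℝ → ℝ, Continuous g → ∫ t in (0:ℝ)..3, h t * g t =
      (∫ t in (0:ℝ)..1, h t * g t) + (∫ t in (1:ℝ)..2, h t * g t)
        + ∫ t in (2:ℝ)..3, h t * g t := by
    intro g hg
    rw [intervalIntegral.integral_add_adjacent_intervals
      (i01.mul_continuousOn hg.continuousOn) (i12.mul_continuousOn hg.continuousOn),
      intervalIntegral.integral_add_adjacent_intervals
      ((i01.mul_continuousOn hg.continuousOn).trans (i12.mul_continuousOn hg.continuousOn))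
      (i23.mul_continuousOn hg.continuousOn)]
  rw [split φ hφcont, split (fun t => w (t+1) - 2 * w t + w (t-1)) (by fun_prop)] at hd
  -- lower bound of the left side
  have p1 : 0 ≤ ∫ t in (0:ℝ)..1, h t * φ t := by
    rw [intervalIntegral.integral_of_le (by norm_num), integral_Ioc_eq_integral_Ioo]
    exact setIntegral_nonneg measurableSet_Ioo fun t ht =>
      mul_nonneg (h0 t ⟨by linarith [ht.1], by linarith [ht.2]⟩) (hφ0 t)
  have p3 : 0 ≤ ∫ t in (2:ℝ)..3, h t * φ t := by
    rw [intervalIntegral.integral_of_le (by norm_num), integral_Ioc_eq_integral_Ioo]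
    exact setIntegral_nonneg measurableSet_Ioo fun t ht =>
      mul_nonneg (h0 t ⟨by linarith [ht.1], by linarith [ht.2]⟩) (hφ0 t)
  have p2 : c * (∫ t in (1:ℝ)..2, h t) ≤ ∫ t in (1:ℝ)..2, h t * φ t := by
    rw [← intervalIntegral.integral_const_mul]
    refine intervalIntegral.integral_mono_on (by norm_num) (i12.const_mul c)
      (i12.mul_continuousOn hφcont.continuousOn) fun t ht => ?_
    rw [mul_comm]
    exact mul_le_mul_of_nonneg_left (hcφ t ht) (h0 t ⟨by linarith [ht.1], by linarith [ht.2]⟩)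
  have A0 : 0 ≤ ∫ t in (0:ℝ)..1, h t := by
    rw [intervalIntegral.integral_of_le (by norm_num), integral_Ioc_eq_integral_Ioo]
    exact setIntegral_nonneg measurableSet_Ioo fun t ht =>
      h0 t ⟨by linarith [ht.1], by linarith [ht.2]⟩
  have B0 : 0 ≤ ∫ t in (1:ℝ)..2, h t := by
    rw [intervalIntegral.integral_of_le (by norm_num), integral_Ioc_eq_integral_Ioo]
    exact setIntegral_nonneg measurableSet_Ioo fun t ht =>
      h0 t ⟨by linarith [ht.1], by linarith [ht.2]⟩
  -- the right side
  have q1 : ∫ t in (0:ℝ)..1, h t * (w (t+1) - 2 * w t + w (t-1))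
      = ∫ t in (1:ℝ)..2, h (t-1) * w t := by
    have : ∫ t in (1:ℝ)..2, h (t-1) * w t = ∫ t in (1:ℝ)..2, (fun s => h s * w (s+1)) (t-1) := by
      simp
    rw [this, intervalIntegral.integral_comp_sub_right (fun s => h s * w (s+1))]
    norm_num
    refine intervalIntegral.integral_congr fun t ht => ?_
    rw [uIcc_of_le (by norm_num)] at ht
    rw [hwl t (by linarith [ht.2]), hwl (t-1) (by linarith [ht.2])]; ring
  have q2 : ∫ t in (1:ℝ)..2, h t * (w (t+1) - 2 * w t + w (t-1))
      = ∫ t in (1:ℝ)..2, -2 * h t * w t := by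
    refine intervalIntegral.integral_congr fun t ht => ?_
    rw [uIcc_of_le (by norm_num)] at ht
    rw [hwr (t+1) (by linarith [ht.1]), hwl (t-1) (by linarith [ht.2])]; ring
  have q3 : ∫ t in (2:ℝ)..3, h t * (w (t+1) - 2 * w t + w (t-1))
      = ∫ t in (1:ℝ)..2, h (t+1) * w t := by
    have : ∫ t in (1:ℝ)..2, h (t+1) * w t = ∫ t in (1:ℝ)..2, (fun s => h s * w (s-1)) (t+1) := by
      simp
    rw [this, intervalIntegral.integral_comp_add_right (fun s => h s * w (s-1))]
    norm_num
    refine intervalIntegral.integral_congr fun t ht => ?_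
    rw [uIcc_of_le (by norm_num)] at ht
    rw [hwr t (by linarith [ht.1]), hwr (t+1) (by linarith [ht.1])]; ring
  have j1 : IntervalIntegrable (fun t => h (t-1)) volume 1 2 := by
    have := i01.comp_sub_right 1
    norm_num at this; exact this
  have j3 : IntervalIntegrable (fun t => h (t+1)) volume 1 2 := by
    have := i23.comp_add_right 1
    norm_num at this; exact this
  have r1 : ∫ t in (0:ℝ)..1, h t = ∫ t in (1:ℝ)..2, h (t-1) := by
    rw [intervalIntegral.integral_comp_sub_right h]; norm_num
  have r3 : ∫ t in (2:ℝ)..3, h t = ∫ t in (1:ℝ)..2, h (t+1) := by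
    rw [intervalIntegral.integral_comp_add_right h]; norm_num
  have m1 := j1.mul_continuousOn (g := w) hwc.continuousOn
  have m2 := (i12.const_mul (-2)).mul_continuousOn (g := w) hwc.continuousOn
  have m3 := j3.mul_continuousOn (g := w) hwc.continuousOn
  have main : (∫ t in (1:ℝ)..2, h (t-1) * w t) + (∫ t in (1:ℝ)..2, -2 * h t * w t)
      + (∫ t in (1:ℝ)..2, h (t+1) * w t) ≤
      (∫ t in (0:ℝ)..1, h t) + (-2) * (∫ t in (1:ℝ)..2, h t) + ∫ t in (2:ℝ)..3, h t := by
    rw [r1, r3, ← intervalIntegral.integral_const_mul,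
      ← intervalIntegral.integral_add m1 m2, ← intervalIntegral.integral_add (m1.add m2) m3,
      ← intervalIntegral.integral_add j1 (i12.const_mul _),
      ← intervalIntegral.integral_add (j1.add (i12.const_mul _)) j3]
    refine intervalIntegral.integral_mono_on_of_le_Ioo (by norm_num) ((m1.add m2).add m3)
      ((j1.add (i12.const_mul _)).add j3) fun t ht => ?_
    have ht1 : t - 1 ∈ Ioo (0:ℝ) 3 := ⟨by linarith [ht.1], by linarith [ht.2]⟩
    have ht3 : t + 1 ∈ Ioo (0:ℝ) 3 := ⟨by linarith [ht.1], by linarith [ht.2]⟩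
    have hc := hconv.2 ht1 ht3 (by norm_num : (0:ℝ) ≤ 1/2) (by norm_num : (0:ℝ) ≤ 1/2)
      (by norm_num)
    have e : (1/2:ℝ) • (t-1) + (1/2:ℝ) • (t+1) = t := by simp only [smul_eq_mul]; ring
    rw [e] at hc
    simp only [smul_eq_mul] at hc
    have : 0 ≤ (1 - w t) * (h (t-1) + -2 * h t + h (t+1)) :=
      mul_nonneg (by linarith [hw1 t]) (by linarith)
    nlinarith [this]
  rw [q1, q2, q3] at hd
  set A := ∫ t in (0:ℝ)..1, h t
  set B := ∫ t in (1:ℝ)..2, h t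
  set C := ∫ t in (2:ℝ)..3, h t
  have f1 : (2 + c) * B - A ≤ C := by linarith
  have f2 : 4 * η * B ≤ c * B := mul_le_mul_of_nonneg_right (by linarith) B0
  have f3 : A ≤ (1 + 3 * η) * B := by
    have g1 := mul_le_mul_of_nonneg_left hyp (by linarith : 0 ≤ 1 + 3 * η)
    have g2 : 0 ≤ (η * (2 - 3 * η)) * A := mul_nonneg (mul_nonneg hη0.le (by linarith)) A0
    nlinarith
  nlinarith
end
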